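/- Let p be an odd prime, let (G, H, T) be a faithful RCC loop folder of order 2p with ⟨T⟩ = G, and let K be a subgroup of G with H ≤ K ≤ G, |G : K| = 2 and |K : H| = p. Set T₁ := T ∩ K, K₁ := ⟨T₁⟩ and H₁ := H ∩ K₁. Assume there exists s ∈ T with s ∉ K that does not commute with all elements of K₁, and set Z := K₁ ∩ C_G(s). Then: (a) |G : C_G(s)| = p and |Z| = |H₁|; (b) G = C_G(s)·K₁ and Z is contained in the center of G; (c) C_G(s) is abelian and the quotient group C_G(s)/Z is cyclic. -/

import Mathlib

open Pointwise

/-- A loop folder `(G, H, T)`: `T` contains `1` and is a transversal for the right cosets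
of every conjugate `H^g = g⁻¹Hg` of `H` in `G` (note `H^g x = H^g t ↔ g*(x*t⁻¹)*g⁻¹ ∈ H`). -/
def IsLoopFolder {G : Type*} [Group G] (H : Subgroup G) (T : Set G) : Prop :=
  (1 : G) ∈ T ∧ ∀ g x : G, ∃! t, t ∈ T ∧ g * (x * t⁻¹) * g⁻¹ ∈ H

/-- The loop folder is right conjugacy closed: `T` is invariant under conjugation by `G`. -/
def IsRCC {G : Type*} [Group G] (T : Set G) : Prop :=
  ∀ t ∈ T, ∀ g : G, g⁻¹ * t * g ∈ T

/-- The loop folder is faithful: the core `⋂_{g ∈ G} g⁻¹Hg` of `H` in `G` is trivial. -/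
def IsFaithfulFolder {G : Type*} [Group G] (H : Subgroup G) : Prop :=
  ∀ x : G, (∀ g : G, g * x * g⁻¹ ∈ H) → x = 1

theorem aux_class {G : Type*} [Group G] (t : G) :
    (Set.range fun g : G => g * t * g⁻¹).ncard = (Subgroup.centralizer {t}).index := by
  have h := MulAction.index_stabilizer (ConjAct G) t
  rw [ConjAct.stabilizer_eq_centralizer] at h
  exact h.symm

/-- product of subgroups is everything, from indices -/
theorem aux_prod {G : Type*} [Group G] [Finite G] (M C : Subgroup G)
    (h : M.relIndex C = M.index) (l : G) : ∃ c ∈ C, ∃ m ∈ M, l = c * m := by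
  have hinj : Function.Injective (fun q : C ⧸ M.subgroupOf C =>
      Quotient.liftOn' q (fun c => (QuotientGroup.mk (c : G) : G ⧸ M)) (by
        intro a b hab
        rw [QuotientGroup.leftRel_apply] at hab
        exact QuotientGroup.eq.2 hab)) := by
    intro q r
    induction q using QuotientGroup.induction_on with | _ a => ?_
    induction r using QuotientGroup.induction_on with | _ b => ?_
    intro hab
    have hab : (QuotientGroup.mk (a : G) : G ⧸ M) = QuotientGroup.mk (b : G) := hab
    rw [QuotientGroup.eq] at hab
    exact QuotientGroup.eq.2 hab
  have hbij := (Nat.bijective_iff_injective_and_card _).2 ⟨hinj, h⟩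
  obtain ⟨q, hq⟩ := hbij.2 (QuotientGroup.mk l)
  induction q using QuotientGroup.induction_on with | _ c => ?_
  have hq : (QuotientGroup.mk (c : G) : G ⧸ M) = QuotientGroup.mk l := hq
  rw [QuotientGroup.eq] at hq
  exact ⟨c, c.2, _, hq, by group⟩

theorem aux_le_index {G : Type*} [Group G] [Finite G] (M C : Subgroup G) :
    M.relIndex C ≤ M.index := by
  rw [← Subgroup.relIndex_top_right]
  exact Subgroup.relIndex_le_of_le_right le_top (by
    rw [Subgroup.relIndex_top_right]; exact Subgroup.index_ne_zero_of_finite)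

theorem aux_normal {L : Type*} [Group L] [Finite L] (p : ℕ) (hp : p.Prime)
    (M : Subgroup L) (T : Set L) (hM : M.index = p) (h1 : (1 : L) ∈ T)
    (hT : T.ncard = p) (hinv : ∀ t ∈ T, ∀ g : L, g * t * g⁻¹ ∈ T)
    (hgen : Subgroup.closure T = ⊤) (hTM : ∀ t ∈ T, t ∈ M → t = 1) : M.Normal := by
  -- class sizes
  have hcl : ∀ t ∈ T, t ≠ 1 → (Subgroup.centralizer {t}).index < p := by
    intro t ht ht1
    rw [← aux_class, ← hT]
    apply Set.ncard_lt_ncard _ (Set.toFinite _)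
    refine ⟨?_, fun h => ?_⟩
    · rintro _ ⟨g, rfl⟩
      exact hinv t ht g
    · obtain ⟨g, hg⟩ := h h1
      apply ht1
      have hg : g * t * g⁻¹ = 1 := hg
      rw [mul_inv_eq_one] at hg
      simpa using hg
  have hrel : ∀ t ∈ T, t ≠ 1 → M.relIndex (Subgroup.centralizer {t}) = p := by
    intro t ht ht1
    set C := Subgroup.centralizer {t} with hC
    apply le_antisymm
    · exact hM ▸ aux_le_index M C
    · have e := Subgroup.relIndex_mul_index (inf_le_right : M ⊓ C ≤ C)
      rw [Subgroup.inf_relIndex_right] at e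
      have d : p ∣ (M ⊓ C).index := hM ▸ Subgroup.index_dvd_of_le inf_le_left
      rw [← e] at d
      rcases (hp.dvd_mul).1 d with d | d
      · exact Nat.le_of_dvd (Nat.pos_of_ne_zero (by
          intro h0
          exact Subgroup.index_ne_zero_of_finite (Subgroup.index_eq_zero_of_relIndex_eq_zero h0))) d
      · have := Nat.le_of_dvd (Nat.pos_of_ne_zero Subgroup.index_ne_zero_of_finite) d
        have h5 : C.index < p := hcl t ht ht1
        omega
  set N := M.normalCore with hN
  have hNM : N ≤ M := Subgroup.normalCore_le M
  have hD : ∀ t ∈ T, t ≠ 1 → M ⊓ Subgroup.centralizer {t} ≤ N := by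
    intro t ht ht1
    set C := Subgroup.centralizer {t} with hC
    have htC : t ∈ C := by rw [hC, Subgroup.mem_centralizer_singleton_iff]
    set E := Subgroup.normalizer ((M ⊓ C : Subgroup L) : Set L) ⊓ C with hE
    have hDE : M ⊓ C ≤ E := le_inf Subgroup.le_normalizer inf_le_right
    have htE : t ∈ E := by
      refine ⟨?_, htC⟩
      refine Subgroup.mem_normalizer_iff.2 ?_
      have key : ∀ h ∈ C, t * h * t⁻¹ = h := by
        intro h hh
        rw [hC, Subgroup.mem_centralizer_singleton_iff] at hh
        rw [← hh]; group
      intro h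
      constructor
      · intro hh
        have := key h hh.2
        simpa only [SetLike.mem_coe, this] using hh
      · intro hh
        have h3 : h ∈ C := by
          have := C.mul_mem (C.mul_mem (C.inv_mem htC) hh.2) htC
          simpa [mul_assoc] using this
        have := key h h3
        simpa only [SetLike.mem_coe, this] using hh
    have e := Subgroup.relIndex_mul_relIndex _ _ _ hDE (inf_le_right : E ≤ C)
    rw [Subgroup.inf_relIndex_right M C, hrel t ht ht1] at e
    have hEC : C ≤ E := by
      rcases (Nat.dvd_prime hp).1 (Dvd.intro _ e) with h | h
      · rw [Subgroup.relIndex_eq_one] at h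
        exact absurd (hTM t ht (h htE).1) ht1
      · rw [h] at e
        rw [← Subgroup.relIndex_eq_one]
        exact Nat.eq_of_mul_eq_mul_left hp.pos (by simpa using e)
    intro d hd l
    obtain ⟨c, hc, m, hm, hl⟩ := aux_prod M C ((hrel t ht ht1).trans hM.symm) l⁻¹
    have hl : l = m⁻¹ * c⁻¹ := by rw [← inv_inv l, hl]; group
    have h1 := (Subgroup.mem_normalizer_iff.1 (hEC (C.inv_mem hc)).1 d).1 hd
    have h2 := M.mul_mem (M.mul_mem (M.inv_mem hm) h1.1) hm
    rw [hl]
    simpa [mul_assoc] using h2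
  have hrelN : ∀ t ∈ T, t ≠ 1 → N.relIndex (Subgroup.centralizer {t}) = p := by
    intro t ht ht1
    rw [← hrel t ht ht1, ← Subgroup.inf_relIndex_right, ← Subgroup.inf_relIndex_right M]
    congr 1
    exact le_antisymm (inf_le_inf_right _ hNM) (le_inf (hD t ht ht1) inf_le_right)
  obtain ⟨t, ht, ht1⟩ : ∃ t ∈ T, t ≠ 1 := by
    by_contra hcon
    push Not at hcon
    have : T ⊆ {1} := fun x hx => hcon x hx
    have := Set.ncard_le_ncard this (Set.toFinite _)
    rw [Set.ncard_singleton, hT] at this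
    have := hp.two_le
    omega
  have htop : Subgroup.centralizer {t} ⊔ N = ⊤ := by
    rw [eq_top_iff, ← hgen, Subgroup.closure_le]
    intro u hu
    by_cases hu1 : u = 1
    · rw [hu1]; exact Subgroup.one_mem _
    have h1 : (Subgroup.centralizer {t} ⊔ N).relIndex (Subgroup.centralizer {u}) ∣ p :=
      hrelN u hu hu1 ▸ Subgroup.relIndex_dvd_of_le_left _ le_sup_right
    have h2 := aux_le_index (Subgroup.centralizer {t} ⊔ N) (Subgroup.centralizer {u})
    have h3 := Nat.le_of_dvd (Nat.pos_of_ne_zero Subgroup.index_ne_zero_of_finite)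
      (Subgroup.index_dvd_of_le (le_sup_left : Subgroup.centralizer {t} ≤ Subgroup.centralizer {t} ⊔ N))
    have h4 := hcl t ht ht1
    rcases (Nat.dvd_prime hp).1 h1 with h | h
    · rw [Subgroup.relIndex_eq_one] at h
      exact h (Subgroup.mem_centralizer_singleton_iff.2 rfl)
    · omega
  have hNi : N.index = p := by
    rw [← Subgroup.relIndex_top_right, ← htop, Subgroup.relIndex_sup_right, hrelN t ht ht1]
  have hMN : M ≤ N := by
    rw [← Subgroup.relIndex_eq_one]
    have := Subgroup.relIndex_mul_index hNM
    rw [hNi, hM] at this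
    exact Nat.eq_of_mul_eq_mul_right hp.pos (by simpa using this)
  rw [le_antisymm hMN hNM]
  infer_instance

theorem aux_card {G : Type*} [Group G] [Finite G] (H K L : Subgroup G) (T : Set G)
    (hLF : IsLoopFolder H T) (hHK : H ≤ K) (hTL : T ∩ (K : Set G) ⊆ L) (hLK : L ≤ K) :
    (T ∩ (K : Set G)).ncard = H.relIndex L := by
  refine Nat.card_eq_of_bijective
    (fun t : (T ∩ (K : Set G) : Set G) =>
      (QuotientGroup.mk (⟨t.1, hTL t.2⟩⁻¹ : L) : L ⧸ H.subgroupOf L)) ⟨?_, ?_⟩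
  · intro a b hab
    have hab : a.1 * b.1⁻¹ ∈ H := by
      have := QuotientGroup.eq.1 hab
      simpa [Subgroup.mem_subgroupOf] using this
    apply Subtype.ext
    exact (hLF.2 1 a.1).unique ⟨a.2.1, by simp⟩ ⟨b.2.1, by simpa using hab⟩
  · intro q
    induction q using QuotientGroup.induction_on with | _ x => ?_
    obtain ⟨t, ⟨ht, h⟩, -⟩ := hLF.2 1 ((x : G)⁻¹)
    have h : (x : G)⁻¹ * t⁻¹ ∈ H := by simpa using h
    have htK : t ∈ K := by
      have := K.mul_mem (K.inv_mem (hHK h)) (K.inv_mem (hLK x.2))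
      simpa using this
    refine ⟨⟨t, ht, htK⟩, ?_⟩
    refine (QuotientGroup.eq.2 ?_).symm
    simpa [Subgroup.mem_subgroupOf] using h

/-- Case 2 properties: if some `s ∈ T \\ K` does not centralize `K₁ := ⟨T ∩ K⟩`, then with
`Z := K₁ ⊓ C_G(s)`: (a) `|G : C_G(s)| = p` and `|Z| = |H₁|`; (b) `G = C_G(s)K₁` and
`Z ≤ Z(G)`; (c) `C_G(s)` is abelian and `C_G(s)/Z` is cyclic. -/
theorem stmt_16 {G : Type*} [Group G] [Finite G] (p : ℕ) (hp : p.Prime) (hodd : Odd p)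
    (H K : Subgroup G) (T : Set G)
    (hLF : IsLoopFolder H T) (hRCC : IsRCC T) (hFaith : IsFaithfulFolder H)
    (hord : Nat.card T = 2 * p) (hgen : Subgroup.closure T = ⊤)
    (hHK : H ≤ K) (hGK : K.index = 2) (hKH : H.relIndex K = p)
    (s : G) (hs : s ∈ T) (hsK : s ∉ K)
    (hsnc : ¬ ∀ x ∈ Subgroup.closure (T ∩ (K : Set G)), s * x = x * s) :
    (Subgroup.centralizer {s}).index = p ∧
    Nat.card (Subgroup.closure (T ∩ (K : Set G)) ⊓ Subgroup.centralizer {s} : Subgroup G) =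
      Nat.card (H ⊓ Subgroup.closure (T ∩ (K : Set G)) : Subgroup G) ∧
    (Subgroup.centralizer {s} : Set G) * (Subgroup.closure (T ∩ (K : Set G)) : Set G) =
      Set.univ ∧
    Subgroup.closure (T ∩ (K : Set G)) ⊓ Subgroup.centralizer {s} ≤ Subgroup.center G ∧
    (∀ a ∈ Subgroup.centralizer ({s} : Set G), ∀ b ∈ Subgroup.centralizer ({s} : Set G),
      a * b = b * a) ∧
    (∃ c ∈ Subgroup.centralizer ({s} : Set G), ∀ x ∈ Subgroup.centralizer ({s} : Set G),
      ∃ z ∈ Subgroup.closure (T ∩ (K : Set G)) ⊓ Subgroup.centralizer {s},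
        ∃ k : ℤ, x = z * c ^ k) := by
  set K₁ := Subgroup.closure (T ∩ (K : Set G)) with hK₁
  set C := Subgroup.centralizer ({s} : Set G) with hC
  have : Fact p.Prime := ⟨hp⟩
  have hKn : K.Normal := Subgroup.normal_of_index_eq_two hGK
  have hinv : ∀ t ∈ T, ∀ g : G, g * t * g⁻¹ ∈ T := by
    intro t ht g
    simpa using hRCC t ht g⁻¹
  have hTK : T ∩ (K : Set G) ⊆ K₁ := Subgroup.subset_closure
  have hK₁K : K₁ ≤ K := (Subgroup.closure_le _).2 Set.inter_subset_right
  have hK₁n : K₁.Normal := by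
    constructor
    intro x hx g
    induction hx using Subgroup.closure_induction with
    | mem x hx => exact hTK ⟨hinv x hx.1 g, hKn.conj_mem x hx.2 g⟩
    | one => simp
    | mul x y _ _ hx hy => simpa [mul_assoc] using K₁.mul_mem hx hy
    | inv x _ hx => simpa [mul_assoc] using K₁.inv_mem hx
  have hcard : (T ∩ (K : Set G)).ncard = p :=
    (aux_card H K K T hLF hHK Set.inter_subset_right le_rfl).trans hKH
  have hrel : H.relIndex K₁ = p :=
    (aux_card H K K₁ T hLF hHK hTK hK₁K).symm.trans hcard
  have hcard2 : (T \ (K : Set G)).ncard = p := by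
    have := Set.ncard_inter_add_ncard_sdiff_eq_ncard T (K : Set G) (Set.toFinite _)
    have h2 : T.ncard = 2 * p := hord
    omega
  -- normality of `H₁` in `K₁`
  have hnorm : (H.subgroupOf K₁).Normal := by
    refine aux_normal p hp _ (((↑) : K₁ → G) ⁻¹' (T ∩ (K : Set G))) hrel ⟨hLF.1, K.one_mem⟩ ?_ ?_
      ?_ ?_
    · rw [← hcard, Set.ncard_preimage_of_injective_subset_range Subtype.val_injective]
      rw [Subtype.range_coe]
      exact hTK
    · intro t ht g
      exact ⟨hinv _ ht.1 _, hKn.conj_mem _ ht.2 _⟩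
    · exact Subgroup.closure_closure_coe_preimage
    · intro t ht htH
      apply Subtype.ext
      exact (hLF.2 1 1).unique ⟨ht.1, by
        simpa using (Subgroup.mem_subgroupOf.1 htH)⟩ ⟨hLF.1, by simp⟩
  have hq : Nat.card (K₁ ⧸ H.subgroupOf K₁) = p := hrel
  have hcomm : ∀ x ∈ K₁, ∀ y ∈ K₁, x * y * x⁻¹ * y⁻¹ ∈ H := by
    intro x hx y hy
    have hcyc : IsCyclic (K₁ ⧸ H.subgroupOf K₁) := isCyclic_of_prime_card hq
    have := (IsCyclic.isMulCommutative (α := K₁ ⧸ H.subgroupOf K₁)).is_comm.comm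
      (QuotientGroup.mk (⟨y, hy⟩⁻¹ : K₁)) (QuotientGroup.mk (⟨x, hx⟩⁻¹ : K₁))
    have := QuotientGroup.eq.1 this
    simpa [Subgroup.mem_subgroupOf, mul_assoc] using this
  have hpow : ∀ x ∈ K₁, x ^ p ∈ H := by
    intro x hx
    have := pow_card_eq_one' (x := (QuotientGroup.mk (⟨x, hx⟩ : K₁) : K₁ ⧸ H.subgroupOf K₁))
    rw [hq, ← QuotientGroup.mk_pow, QuotientGroup.eq_one_iff] at this
    simpa [Subgroup.mem_subgroupOf] using this
  have hab : ∀ x ∈ K₁, ∀ y ∈ K₁, x * y = y * x := by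
    intro x hx y hy
    have : x * y * x⁻¹ * y⁻¹ = 1 := by
      apply hFaith
      intro g
      have := hcomm _ (hK₁n.conj_mem x hx g) _ (hK₁n.conj_mem y hy g)
      simpa [mul_assoc] using this
    rw [mul_inv_eq_one, mul_inv_eq_iff_eq_mul] at this
    exact this
  have hpow1 : ∀ x ∈ K₁, x ^ p = 1 := by
    intro x hx
    apply hFaith
    intro g
    rw [← conj_pow]
    exact hpow _ (hK₁n.conj_mem x hx g)
  have hpg : IsPGroup p K₁ := fun x => ⟨1, by
    apply Subtype.ext
    simpa using hpow1 x x.2⟩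
  -- class of `s`
  have hsub : (Set.range fun g : G => g * s * g⁻¹) ⊆ T \ (K : Set G) := by
    rintro _ ⟨g, rfl⟩
    refine ⟨hinv s hs g, fun h => hsK ?_⟩
    have := hKn.conj_mem _ h g⁻¹
    simpa [mul_assoc] using this
  have hCle : C.index ≤ p := by
    rw [hC, ← aux_class, ← hcard2]
    exact Set.ncard_le_ncard hsub (Set.toFinite _)
  have hCK : C.relIndex K₁ = p := by
    apply le_antisymm ((aux_le_index C K₁).trans hCle)
    obtain ⟨n, hn⟩ := hpg.index (C.subgroupOf K₁)
    have hn : C.relIndex K₁ = p ^ n := hn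
    rcases Nat.eq_zero_or_pos n with h0 | h0
    · rw [h0, pow_zero, Subgroup.relIndex_eq_one] at hn
      exact absurd (fun x hx => (Subgroup.mem_centralizer_singleton_iff.1 (hn hx)).symm) hsnc
    · rw [hn]
      exact Nat.le_self_pow h0.ne' p
  have hCi : C.index = p := le_antisymm hCle (hCK ▸ aux_le_index C K₁)
  have hprod := aux_prod C K₁ (hCK.trans hCi.symm)
  have hclass : (Set.range fun g : G => g * s * g⁻¹) = T \ (K : Set G) := by
    apply Set.eq_of_subset_of_ncard_le hsub _ (Set.toFinite _)
    rw [hcard2, aux_class, ← hC, hCi]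
  have htop : K₁ ⊔ Subgroup.zpowers s = ⊤ := by
    rw [eq_top_iff, ← hgen, Subgroup.closure_le]
    intro t ht
    by_cases htK : t ∈ K
    · exact Subgroup.mem_sup_left (hTK ⟨ht, htK⟩)
    · obtain ⟨g, hg⟩ : t ∈ (Set.range fun g : G => g * s * g⁻¹) := hclass ▸ ⟨ht, htK⟩
      have hg : g * s * g⁻¹ = t := hg
      obtain ⟨k, hk, c, hc, rfl⟩ := hprod g
      have hc := Subgroup.mem_centralizer_singleton_iff.1 hc
      have : t = k * s * k⁻¹ := by
        rw [← hg]
        calc k * c * s * (k * c)⁻¹ = k * (c * s) * c⁻¹ * k⁻¹ := by group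
          _ = k * s * k⁻¹ := by rw [hc]; group
      rw [this]
      have hk' := Subgroup.mem_sup_left (T := Subgroup.zpowers s) hk
      exact mul_mem (mul_mem hk' (Subgroup.mem_sup_right (Subgroup.mem_zpowers s))) (inv_mem hk')
  have hform : ∀ x : G, ∃ k ∈ K₁, ∃ n : ℤ, x = k * s ^ n := by
    intro x
    have hx : x ∈ K₁ ⊔ Subgroup.zpowers s := htop ▸ Subgroup.mem_top x
    obtain ⟨k, hk, y, ⟨n, rfl⟩, rfl⟩ := Subgroup.mem_sup_of_normal_left.1 hx
    exact ⟨k, hk, n, rfl⟩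
  have hsC : s ∈ C := Subgroup.mem_centralizer_singleton_iff.2 rfl
  have hcen : K₁ ⊓ C ≤ Subgroup.center G := by
    intro z hz
    rw [Subgroup.mem_center_iff]
    intro g
    obtain ⟨k, hk, n, rfl⟩ := hform g
    have h1 : Commute k z := hab k hk z hz.1
    have h2 : Commute s z := (Subgroup.mem_centralizer_singleton_iff.1 hz.2).symm
    exact (h1.mul_left (h2.zpow_left n))
  have hCform : ∀ x ∈ C, ∃ z ∈ K₁ ⊓ C, ∃ n : ℤ, x = z * s ^ n := by
    intro x hx
    obtain ⟨k, hk, n, rfl⟩ := hform x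
    refine ⟨k, ⟨hk, ?_⟩, n, rfl⟩
    have := C.mul_mem hx (C.inv_mem (C.zpow_mem hsC n))
    simpa using this
  refine ⟨hCi, ?_, ?_, hcen, ?_, s, hsC, hCform⟩
  · have h1 := Subgroup.relIndex_mul_relIndex ⊥ (K₁ ⊓ C) K₁ bot_le inf_le_left
    have h2 := Subgroup.relIndex_mul_relIndex ⊥ (H ⊓ K₁) K₁ bot_le inf_le_right
    rw [Subgroup.inf_relIndex_left, hCK, Subgroup.relIndex_bot_left] at h1
    rw [Subgroup.inf_relIndex_right, hrel, Subgroup.relIndex_bot_left] at h2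
    exact Nat.eq_of_mul_eq_mul_right hp.pos (h1.trans h2.symm)
  · rw [Set.eq_univ_iff_forall]
    intro x
    obtain ⟨k, hk, c, hc, h⟩ := hprod x⁻¹
    refine Set.mem_mul.2 ⟨c⁻¹, C.inv_mem hc, k⁻¹, K₁.inv_mem hk, ?_⟩
    rw [← mul_inv_rev, ← h, inv_inv]
  · intro a ha b hb
    obtain ⟨z, hz, n, rfl⟩ := hCform a ha
    have h1 : Commute z b := (Subgroup.mem_center_iff.1 (hcen hz) b).symm
    have h2 : Commute s b := (Subgroup.mem_centralizer_singleton_iff.1 hb).symm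
    exact h1.mul_left (h2.zpow_left n)
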